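/- arXiv:2105.06098 — 2 statements merged into one kernel-verified Lean document; each statement's English description precedes it below -/
import Mathlib

section
/- Let q : ℝ×ℝ → ℂ be a smooth solution of the TOFKN equation. Then at every point (x,t), ∂_t(q·conj(q)) = ∂_x[ (5/2)(q·conj(q))³ + 3i·(q·conj(q))·(q_x·conj(q) − q·conj(q)_x) − (q_{xx}·conj(q) + q·conj(q)_{xx}) + q_x·conj(q)_x ]; that is, the mass density |q|² satisfies a local conservation law with the displayed flux. -/
noncomputable section

open Complex Matrix MeasureTheory ComplexConjugate Filter

abbrev Mat2 : Type := Matrix (Fin 2) (Fin 2) ℂ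

/-- Partial derivative in the first (space) variable of a function on `ℝ × ℝ`. -/
def px (f : ℝ × ℝ → ℂ) : ℝ × ℝ → ℂ := fun p => deriv (fun y => f (y, p.2)) p.1

/-- Partial derivative in the second (time) variable of a function on `ℝ × ℝ`. -/
def pt (f : ℝ × ℝ → ℂ) : ℝ × ℝ → ℂ := fun p => deriv (fun s => f (p.1, s)) p.2

/-- Entrywise partial derivative in `x` of a matrix-valued function. -/
def DxM (M : ℝ × ℝ → Mat2) : ℝ × ℝ → Mat2 :=
  fun p => Matrix.of fun i j => deriv (fun y => M (y, p.2) i j) p.1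

/-- Entrywise partial derivative in `t` of a matrix-valued function. -/
def DtM (M : ℝ × ℝ → Mat2) : ℝ × ℝ → Mat2 :=
  fun p => Matrix.of fun i j => deriv (fun s => M (p.1, s) i j) p.2

def sigma1 : Mat2 := !![0, 1; 1, 0]
def sigma2 : Mat2 := !![0, -Complex.I; Complex.I, 0]
def sigma3 : Mat2 := !![1, 0; 0, -1]

/-- The potential matrix `Q`. -/
def Qmat (q : ℝ × ℝ → ℂ) : ℝ × ℝ → Mat2 := fun p => !![0, q p; -conj (q p), 0]

/-- `|q|² = q ⬝ conj q`. -/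
def msq (q : ℝ × ℝ → ℂ) : ℝ × ℝ → ℂ := fun p => q p * conj (q p)

/-- The `x`-part Lax matrix `X(λ; x, t) = iλ²σ₃ + λQ`. -/
def Xmat (q : ℝ × ℝ → ℂ) (l : ℂ) : ℝ × ℝ → Mat2 :=
  fun p => (Complex.I * l ^ 2) • sigma3 + l • Qmat q p

/-- The `t`-part Lax matrix `T(λ; x, t)`. -/
def Tmat (q : ℝ × ℝ → ℂ) (l : ℂ) : ℝ × ℝ → Mat2 := fun p =>
  (4 * l ^ 4 + (3 / 2) * (msq q p) ^ 2 - 2 * l ^ 2 * msq q p) • Xmat q l p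
    + (-2 * Complex.I * l ^ 3 + 3 * Complex.I * l * msq q p) • (sigma3 * DxM (Qmat q) p)
    - (l ^ 2 * (px q p * conj (q p) - q p * px (fun p' => conj (q p')) p)) • sigma3
    - l • DxM (DxM (Qmat q)) p

/-- The third-order flow Kaup–Newell equation
`q_t + q_{xxx} − 3i(|q|²q_x)_x − (3/2)(|q|⁴q)_x = 0`. -/
def TOFKN (q : ℝ × ℝ → ℂ) : Prop :=
  ∀ p : ℝ × ℝ,
    pt q p + px (px (px q)) p
      - 3 * Complex.I * px (fun p' => msq q p' * px q p') p
      - (3 / 2) * px (fun p' => (msq q p') ^ 2 * q p') p = 0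

/-- The flux appearing in the local conservation law for the mass density `|q|²`. -/
def fluxF (q : ℝ × ℝ → ℂ) : ℝ × ℝ → ℂ := fun p =>
  (5 / 2) * (msq q p) ^ 3
    + 3 * Complex.I * msq q p * (px q p * conj (q p) - q p * px (fun p' => conj (q p')) p)
    - (px (px q) p * conj (q p) + q p * px (px (fun p' => conj (q p'))) p)
    + px q p * px (fun p' => conj (q p')) p

theorem px_hasDerivAt {f : ℝ × ℝ → ℂ} (hf : ContDiff ℝ (⊤ : ℕ∞) f) (p : ℝ × ℝ) :
    HasDerivAt (fun y => f (y, p.2)) (px f p) p.1 := by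
  have hd : Differentiable ℝ f := hf.differentiable (by simp)
  have : DifferentiableAt ℝ (fun y => f (y, p.2)) p.1 := by fun_prop
  exact this.hasDerivAt

theorem pt_hasDerivAt {f : ℝ × ℝ → ℂ} (hf : ContDiff ℝ (⊤ : ℕ∞) f) (p : ℝ × ℝ) :
    HasDerivAt (fun s => f (p.1, s)) (pt f p) p.2 := by
  have hd : Differentiable ℝ f := hf.differentiable (by simp)
  have : DifferentiableAt ℝ (fun s => f (p.1, s)) p.2 := by fun_prop
  exact this.hasDerivAt

theorem px_contDiff {f : ℝ × ℝ → ℂ} (hf : ContDiff ℝ (⊤ : ℕ∞) f) :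
    ContDiff ℝ (⊤ : ℕ∞) (px f) := by
  have hd : Differentiable ℝ f := hf.differentiable (by simp)
  have h : px f = fun p => fderiv ℝ f p (1, 0) := by
    funext p
    have h1 : HasDerivAt (fun y : ℝ => (y, p.2)) ((1 : ℝ), (0 : ℝ)) p.1 :=
      (hasDerivAt_id p.1).prodMk (hasDerivAt_const p.1 p.2)
    have h2 : HasFDerivAt f (fderiv ℝ f p) (p.1, p.2) := (hd p).hasFDerivAt
    exact (h2.comp_hasDerivAt p.1 h1).deriv
  rw [h]
  exact (hf.fderiv_right (m := (⊤ : ℕ∞)) (by simp)).clm_apply contDiff_const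

theorem conj_contDiff {f : ℝ × ℝ → ℂ} (hf : ContDiff ℝ (⊤ : ℕ∞) f) :
    ContDiff ℝ (⊤ : ℕ∞) (fun p => conj (f p)) :=
  Complex.conjCLE.contDiff.comp hf

theorem hasDerivAt_conj' {f : ℝ → ℂ} {f' : ℂ} {x : ℝ} (hf : HasDerivAt f f' x) :
    HasDerivAt (fun y => conj (f y)) (conj f') x :=
  (Complex.conjCLE.hasFDerivAt (x := f x)).comp_hasDerivAt x hf

theorem px_conj {f : ℝ × ℝ → ℂ} (hf : ContDiff ℝ (⊤ : ℕ∞) f) :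
    px (fun p => conj (f p)) = fun p => conj (px f p) := by
  funext p
  exact (hasDerivAt_conj' (px_hasDerivAt hf p)).deriv

/-- for a smooth solution of the TOFKN equation, the mass density `|q|²`
satisfies the local conservation law `∂ₜ(|q|²) = ∂ₓ(flux)`. -/
theorem mass_density_conservation (q : ℝ × ℝ → ℂ) (hq : ContDiff ℝ (⊤ : ℕ∞) q)
    (hTOFKN : TOFKN q) :
    ∀ p : ℝ × ℝ, pt (msq q) p = px (fluxF q) p := by
  intro p
  have hq1 := px_contDiff hq
  have hq2 := px_contDiff hq1
  have d0 := px_hasDerivAt hq p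
  have d1 := px_hasDerivAt hq1 p
  have d2 := px_hasDerivAt hq2 p
  have c0 := hasDerivAt_conj' d0
  have c1 := hasDerivAt_conj' d1
  have c2 := hasDerivAt_conj' d2
  have t0 := pt_hasDerivAt hq p
  have e := hTOFKN p
  have hm := d0.mul c0
  have hA : px (fun p' => msq q p' * px q p') p = _ := (hm.mul d1).deriv
  have hB : px (fun p' => (msq q p') ^ 2 * q p') p = _ := ((hm.pow 2).mul d0).deriv
  have hL : pt (msq q) p = _ := (t0.mul (hasDerivAt_conj' t0)).deriv
  have hF : fluxF q = fun p => (5 / 2) * (msq q p) ^ 3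
    + 3 * Complex.I * msq q p * (px q p * conj (q p) - q p * conj (px q p))
    - (px (px q) p * conj (q p) + q p * conj (px (px q) p))
    + px q p * conj (px q p) := by
    funext p
    simp only [fluxF, px_conj hq, px_conj hq1]
  have hR : px (fluxF q) p = _ := (congrArg (fun f => px f p) hF).trans
    ((((hm.pow 3).const_mul (5 / 2 : ℂ)).add
      ((hm.const_mul (3 * Complex.I)).mul ((d1.mul c0).sub (d0.mul c1)))).sub
      ((d2.mul c0).add (d0.mul c2)) |>.add (d1.mul c1)).deriv
  rw [hA, hB] at e
  rw [hL, hR]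
  simp only [Pi.mul_apply, Pi.pow_apply, Pi.sub_apply, Pi.add_apply, Prod.mk.eta] at e ⊢
  have e' := congrArg conj e
  simp only [map_add, map_sub, map_mul, map_pow, map_zero, map_div₀, Complex.conj_conj,
    Complex.conj_I, map_ofNat, map_natCast] at e'
  norm_num at e e' ⊢
  linear_combination conj (q p) * e + q p * e'
end
end

section
/- Let q : ℝ×ℝ → ℂ be a smooth solution of the TOFKN equation, and define the flux F(x,t) = (5/2)|q|⁶ + 3i|q|²(q_x·conj(q) − q·conj(q)_x) − (q_{xx}·conj(q) + q·conj(q)_{xx}) + q_x·conj(q)_x. Assume that for every t the functions x ↦ |q(x,t)|² and x ↦ ∂_t(|q(x,t)|²) are Lebesgue integrable on ℝ, that F(x,t) → 0 as x → ±∞ for every t, and that for every compact interval of times there is an integrable function g : ℝ → ℝ with |∂_t(|q(x,t)|²)| ≤ g(x) for all x and all t in that interval. Then the mass I₁(t) = ∫_ℝ |q(x,t)|² dx is constant in t. -/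
noncomputable section

open Complex Matrix MeasureTheory ComplexConjugate Filter

lemma aux_hd {f : ℝ → ℂ} (hf : ContDiff ℝ (⊤ : ℕ∞) f) (x : ℝ) : HasDerivAt f (deriv f x) x :=
  ((hf.differentiable (by simp)) x).hasDerivAt

lemma aux_deriv {f : ℝ → ℂ} (hf : ContDiff ℝ (⊤ : ℕ∞) f) : ContDiff ℝ (⊤ : ℕ∞) (deriv f) :=
  (contDiff_infty_iff_deriv.1 hf).2

lemma aux_conj (f : ℝ → ℂ) : deriv (fun y => conj (f y)) = fun y => conj (deriv f y) := by
  funext y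
  exact deriv.star (f := f) (x := y)

lemma aux_hconj {f : ℝ → ℂ} {f' : ℂ} {x : ℝ} (h : HasDerivAt f f' x) :
    HasDerivAt (fun y => conj (f y)) (conj f') x := h.star

lemma aux_pt (q : ℝ × ℝ → ℂ) (hq : ContDiff ℝ (⊤ : ℕ∞) q) (x t : ℝ) :
    HasDerivAt (fun s => msq q (x, s)) (pt (msq q) (x, t)) t ∧
    pt (msq q) (x, t) = pt q (x, t) * conj (q (x, t)) + q (x, t) * conj (pt q (x, t)) := by
  have hw : ContDiff ℝ (⊤ : ℕ∞) (fun s => q (x, s)) := hq.comp (contDiff_const.prodMk contDiff_id)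
  have h := aux_hd hw t
  have h2 := h.mul (aux_hconj h)
  have e : pt (msq q) (x, t) = pt q (x, t) * conj (q (x, t)) + q (x, t) * conj (pt q (x, t)) :=
    h2.deriv
  refine ⟨?_, e⟩
  rw [e]
  exact h2

lemma aux_flux (q : ℝ × ℝ → ℂ) (hq : ContDiff ℝ (⊤ : ℕ∞) q) (hT : TOFKN q) (x t : ℝ) :
    HasDerivAt (fun y => fluxF q (y, t)) (pt (msq q) (x, t)) x := by
  have hu : ContDiff ℝ (⊤ : ℕ∞) (fun y => q (y, t)) := hq.comp (contDiff_id.prodMk contDiff_const)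
  have E := hT (x, t)
  rw [(aux_pt q hq x t).2]
  simp only [fluxF, msq, px] at E ⊢
  generalize pt q (x, t) = w at E ⊢
  have hq' : ∀ y, q (y, t) = (fun y => q (y, t)) y := fun _ => rfl
  generalize hU : (fun y => q (y, t)) = u at *
  simp only [hq'] at E ⊢
  simp only [aux_conj] at E ⊢
  have h0 := aux_hd hu x
  have h1 := aux_hd (aux_deriv hu) x
  have h2 := aux_hd (aux_deriv (aux_deriv hu)) x
  have c0 := aux_hconj h0
  have c1 := aux_hconj h1
  have c2 := aux_hconj h2
  have m := h0.mul c0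
  have A := (m.mul h1).deriv
  have B := ((m.pow 2).mul h0).deriv
  have F := ((((m.pow 3).const_mul (5/2 : ℂ)).add
    ((m.const_mul (3 * Complex.I)).mul ((h1.mul c0).sub (h0.mul c1)))).sub
    ((h2.mul c0).add (h0.mul c2))).add (h1.mul c1)
  have A' : deriv (fun y => u y * conj (u y) * deriv u y) x = _ := A
  have B' : deriv (fun y => (u y * conj (u y)) ^ 2 * u y) x = _ := B
  rw [A', B'] at E
  have Ec := congrArg conj E
  refine HasDerivAt.congr_deriv F ?_
  have e2 : (starRingEnd ℂ) 2 = 2 := Complex.conj_ofNat 2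
  have e3 : (starRingEnd ℂ) 3 = 3 := Complex.conj_ofNat 3
  simp only [Pi.mul_apply, Pi.sub_apply, Pi.pow_apply, map_add, map_sub, map_mul, map_pow,
    map_div₀, Complex.conj_I, Complex.conj_conj, map_zero, Nat.cast_ofNat, e2, e3] at E Ec ⊢
  linear_combination (-conj (u x)) * E - u x * Ec

/-- for a smooth solution of the TOFKN equation with integrable mass density,
vanishing flux at spatial infinity, and a locally-uniform integrable domination of
`∂ₜ(|q|²)`, the mass `I₁(t) = ∫ |q(x,t)|² dx` is constant in `t`. -/
theorem mass_conserved (q : ℝ × ℝ → ℂ) (hq : ContDiff ℝ (⊤ : ℕ∞) q) (hTOFKN : TOFKN q)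
    (hint : ∀ t : ℝ, Integrable (fun x : ℝ => msq q (x, t)))
    (hint' : ∀ t : ℝ, Integrable (fun x : ℝ => pt (msq q) (x, t)))
    (hfluxTop : ∀ t : ℝ, Tendsto (fun x : ℝ => fluxF q (x, t)) atTop (nhds 0))
    (hfluxBot : ∀ t : ℝ, Tendsto (fun x : ℝ => fluxF q (x, t)) atBot (nhds 0))
    (hdom : ∀ a b : ℝ, ∃ g : ℝ → ℝ, Integrable g ∧
      ∀ x : ℝ, ∀ t ∈ Set.Icc a b, ‖pt (msq q) (x, t)‖ ≤ g x) :
    ∀ t₁ t₂ : ℝ, (∫ x : ℝ, msq q (x, t₁)) = ∫ x : ℝ, msq q (x, t₂) := by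
  have hz : ∀ t, (∫ x : ℝ, pt (msq q) (x, t)) = 0 := by
    intro t
    have := integral_of_hasDerivAt_of_tendsto (fun x => aux_flux q hq hTOFKN x t) (hint' t)
      (hfluxBot t) (hfluxTop t)
    simpa using this
  have hd : ∀ t, HasDerivAt (fun t => ∫ x : ℝ, msq q (x, t)) 0 t := by
    intro t
    obtain ⟨g, hg, hb⟩ := hdom (t - 1) (t + 1)
    have := (hasDerivAt_integral_of_dominated_loc_of_deriv_le (μ := volume)
      (F := fun t x => msq q (x, t)) (F' := fun t x => pt (msq q) (x, t)) (bound := g)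
      (x₀ := t) (s := Set.Icc (t - 1) (t + 1)) (Icc_mem_nhds (by linarith) (by linarith))
      (Eventually.of_forall fun s => (hint s).aestronglyMeasurable) (hint t)
      (hint' t).aestronglyMeasurable (Eventually.of_forall fun x s hs => hb x s hs) hg
      (Eventually.of_forall fun x s _ => (aux_pt q hq x s).1)).2
    rwa [hz t] at this
  intro t₁ t₂
  exact is_const_of_deriv_eq_zero (fun t => (hd t).differentiableAt) (fun t => (hd t).deriv) t₁ t₂
end
end
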